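/- arXiv:1306.0852 — 2 statements merged into one kernel-verified Lean document; each statement's English description precedes it below -/
import Mathlib

section
/- Let f : [0,∞) → ℝ be differentiable with f' Lebesgue integrable on [a,b], where 0 < a < b < ∞. Let m ∈ (0,1] and q > 1. If |f'|^q is (1,m)-GA-convex on [0, max{a^{1/m}, b}], then |(b²·f(b) − a²·f(a))/2 − ∫_a^b x·f(x) dx| ≤ ((ln b − ln a)/2^{1+1/q}) · [L(a^{3q/(q−1)}, b^{3q/(q−1)})]^{1−1/q} · [ |f'(b)|^q + m·|f'(a^{1/m})|^q ]^{1/q}. -/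
open Real MeasureTheory Set

/-- The logarithmic mean `L(x,y) = (y - x)/(ln y - ln x)`. -/
noncomputable def L (x y : ℝ) : ℝ := (y - x) / (Real.log y - Real.log x)

/-- `G(α,ℓ) = ∫_0^1 t^α a^{ℓ(1-t)} b^{ℓ t} dt` (for parameters `a, b`). -/
noncomputable def G (a b α ℓ : ℝ) : ℝ :=
  ∫ t in (0:ℝ)..1, t ^ α * a ^ (ℓ * (1 - t)) * b ^ (ℓ * t)

/-- A function `h` is `(α,m)`-GA-convex on `[0,c]` if
`h(x^λ y^{m(1-λ)}) ≤ λ^α h(x) + m(1-λ^α) h(y)` for all `x, y ∈ [0,c]`, `λ ∈ [0,1]`. -/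
def GAConvexOn (α m c : ℝ) (h : ℝ → ℝ) : Prop :=
  ∀ x ∈ Icc (0:ℝ) c, ∀ y ∈ Icc (0:ℝ) c, ∀ l ∈ Icc (0:ℝ) 1,
    h (x ^ l * y ^ (m * (1 - l))) ≤ l ^ α * h x + m * (1 - l ^ α) * h y

/-- A function `h` is `(α,m)`-GA-concave on `[0,c]` if
`h(x^λ y^{m(1-λ)}) ≥ λ^α h(x) + m(1-λ^α) h(y)` for all `x, y ∈ [0,c]`, `λ ∈ [0,1]`. -/
def GAConcaveOn (α m c : ℝ) (h : ℝ → ℝ) : Prop :=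
  ∀ x ∈ Icc (0:ℝ) c, ∀ y ∈ Icc (0:ℝ) c, ∀ l ∈ Icc (0:ℝ) 1,
    l ^ α * h x + m * (1 - l ^ α) * h y ≤ h (x ^ l * y ^ (m * (1 - l)))

/-!
Integration by parts turns the left-hand side into `½ ∫ x ^ 2 f'(x) dx`, and the right-hand side is
adapted to the measure `dx / x`. Hölder's inequality for that measure, applied to `x ^ 3` and
`|f'|`, separates the explicit integral `∫ x ^ (3 p) dx / x = (ln b - ln a) L(a ^ (3 p), b ^ (3 p))`
from `∫ |f'| ^ q dx / x`. In the coordinate `t` given by `x = b ^ t a ^ (1 - t)` one has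
`dx / x = (ln b - ln a) dt`, and GA-convexity bounds `|f'| ^ q` by a combination of its values at
`b` and `a ^ (1 / m)` with weights depending only on `t`, which integrate explicitly over `[0, 1]`.
-/

section Interval

variable {a b : ℝ}

theorem memLp_restrict_of_continuousOn {X E : Type*} [TopologicalSpace X] [MeasurableSpace X]
    [OpensMeasurableSpace X] [NormedAddCommGroup E] {μ : Measure X} [IsFiniteMeasureOnCompacts μ]
    {K : Set X} {φ : X → E} (hφ : ContinuousOn φ K) (hK : IsCompact K) (hKm : MeasurableSet K)
    (r : ENNReal) : MemLp φ r (μ.restrict K) := by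
  have : IsFiniteMeasure (μ.restrict K) := ⟨by simpa using hK.measure_lt_top⟩
  obtain ⟨C, hC⟩ := hK.exists_bound_of_continuousOn hφ
  exact .of_bound (hφ.aestronglyMeasurable_of_isCompact hK hKm) C
    ((ae_restrict_iff' hKm).2 (ae_of_all _ hC))

theorem memLp_rpow_const_restrict_Ioc (ha : 0 < a) (c : ℝ) (r : ENNReal) :
    MemLp (fun x : ℝ ↦ x ^ c) r (volume.restrict (Ioc a b)) := by
  have hcont : ContinuousOn (fun x : ℝ ↦ x ^ c) (Icc a b) :=
    continuousOn_id.rpow_const fun x hx ↦ .inl (ha.trans_le hx.1).ne'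
  exact (memLp_restrict_of_continuousOn hcont isCompact_Icc measurableSet_Icc r).mono_measure
    (Measure.restrict_mono Ioc_subset_Icc_self le_rfl)

/-- Hölder's inequality with respect to `dx / x`, for the factors `x ^ (s + 1)` and `‖F x‖`. -/
theorem integral_rpow_mul_norm_le_holder {E : Type*} [NormedAddCommGroup E] {F : ℝ → E} {p q s : ℝ}
    (ha : 0 < a) (hab : a ≤ b) (hpq : p.HolderConjugate q)
    (hF : MemLp F (ENNReal.ofReal q) (volume.restrict (Ioc a b))) :
    ∫ x in a..b, x ^ s * ‖F x‖ ≤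
      (∫ x in a..b, x ^ ((s + 1) * p - 1)) ^ (1 / p) * (∫ x in a..b, ‖F x‖ ^ q / x) ^ (1 / q) := by
  have hq : q ≠ 0 := hpq.symm.ne_zero
  have hpos : ∀ x ∈ Ioc a b, 0 < x := fun x hx ↦ ha.trans hx.1
  have hexp : (s + 1 / q) * p = (s + 1) * p - 1 := by
    have hpq' : p / q = p - 1 := hpq.div_conj_eq_sub_one
    linear_combination hpq'
  have hsplit : ∀ x ∈ Ioc a b, x ^ (s + 1 / q) * (x ^ (-(1 / q)) * ‖F x‖) = x ^ s * ‖F x‖ := by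
    intro x hx
    rw [← mul_assoc, ← rpow_add (hpos x hx), add_neg_cancel_right]
  have hleft : ∀ x ∈ Ioc a b, (x ^ (s + 1 / q)) ^ p = x ^ ((s + 1) * p - 1) := by
    intro x hx
    rw [← rpow_mul (hpos x hx).le, hexp]
  have hright : ∀ x ∈ Ioc a b, (x ^ (-(1 / q)) * ‖F x‖) ^ q = ‖F x‖ ^ q / x := by
    intro x hx
    have hx0 := (hpos x hx).le
    rw [mul_rpow (rpow_nonneg hx0 _) (norm_nonneg _), ← rpow_mul hx0, neg_mul,
      one_div_mul_cancel hq, rpow_neg_one, inv_mul_eq_div]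
  simp only [intervalIntegral.integral_of_le hab]
  rw [← setIntegral_congr_fun measurableSet_Ioc hsplit,
    ← setIntegral_congr_fun measurableSet_Ioc hleft,
    ← setIntegral_congr_fun measurableSet_Ioc hright]
  refine integral_mul_le_Lp_mul_Lq_of_nonneg hpq ?_ ?_ (memLp_rpow_const_restrict_Ioc ha _ _)
    (hF.norm.mul' (memLp_rpow_const_restrict_Ioc ha _ ⊤))
  · exact ae_restrict_of_forall_mem measurableSet_Ioc fun x hx ↦ rpow_nonneg (hpos x hx).le _
  · exact ae_restrict_of_forall_mem measurableSet_Ioc fun x hx ↦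
      mul_nonneg (rpow_nonneg (hpos x hx).le _) (norm_nonneg _)

theorem intervalIntegrable_norm_rpow_div {E : Type*} [NormedAddCommGroup E] {F : ℝ → E} {q : ℝ}
    (ha : 0 < a) (hab : a ≤ b) (hq : 0 ≤ q)
    (hF : MemLp F (ENNReal.ofReal q) (volume.restrict (Ioc a b))) :
    IntervalIntegrable (fun x ↦ ‖F x‖ ^ q / x) volume a b := by
  have hFq : IntervalIntegrable (fun x ↦ ‖F x‖ ^ q) volume a b := by
    rw [intervalIntegrable_iff_integrableOn_Ioc_of_le hab, IntegrableOn]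
    simpa only [ENNReal.toReal_ofReal hq] using hF.integrable_norm_rpow'
  refine hFq.mul_continuousOn (continuousOn_inv₀.mono fun x hx ↦ ?_)
  exact ((lt_min ha (ha.trans_le hab)).trans_le hx.1).ne'

theorem integral_pow_succ_smul_deriv {E : Type*} [NormedAddCommGroup E] [NormedSpace ℝ E]
    [CompleteSpace E] {f f' : ℝ → E} (n : ℕ)
    (hf : ∀ x ∈ uIcc a b, HasDerivWithinAt f (f' x) (uIcc a b) x)
    (hf' : IntervalIntegrable f' volume a b) :
    ∫ x in a..b, x ^ (n + 1) • f' x =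
      b ^ (n + 1) • f b - a ^ (n + 1) • f a - (n + 1 : ℝ) • ∫ x in a..b, x ^ n • f x := by
  have hpow : ∀ x ∈ uIcc a b,
      HasDerivWithinAt (fun y : ℝ ↦ y ^ (n + 1)) ((n + 1) * x ^ n) (uIcc a b) x := fun x _ ↦ by
    simpa using (hasDerivAt_pow (n + 1) x).hasDerivWithinAt
  have hcont : Continuous fun x : ℝ ↦ (n + 1) * x ^ n := by fun_prop
  rw [intervalIntegral.integral_smul_deriv_eq_deriv_smul_of_hasDerivWithinAt hpow hf
    (hcont.intervalIntegrable a b) hf', ← intervalIntegral.integral_smul]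
  simp only [mul_smul]

end Interval

section LogMean

variable {a b : ℝ}

theorem L_nonneg {x y : ℝ} (hx : 0 < x) (hy : 0 < y) : 0 ≤ L x y := by
  obtain hxy | hyx := le_total x y
  · exact div_nonneg (sub_nonneg.2 hxy) (sub_nonneg.2 (log_le_log hx hxy))
  · exact div_nonneg_of_nonpos (sub_nonpos.2 hyx) (sub_nonpos.2 (log_le_log hy hyx))

theorem integral_rpow_sub_one_eq_mul_L {r : ℝ} (ha : 0 < a) (hb : 0 < b) (hr : r ≠ 0) :
    ∫ x in a..b, x ^ (r - 1) = (log b - log a) * L (a ^ r) (b ^ r) := by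
  obtain rfl | hab := eq_or_ne a b
  · simp
  have hlog : log b - log a ≠ 0 := sub_ne_zero.2 fun h ↦ hab (log_injOn_pos ha hb h.symm)
  rw [integral_rpow (.inr ⟨by simpa [sub_eq_iff_eq_add] using hr, notMem_uIcc_of_lt ha hb⟩), L,
    log_rpow ha, log_rpow hb, sub_add_cancel]
  field_simp

/-- The position `t` of `x` on the geometric segment from `a` to `b`, i.e. the solution of
`x = b ^ t * a ^ (1 - t)`. -/
noncomputable def logCoord (a b x : ℝ) : ℝ := (log x - log a) / (log b - log a)

theorem logCoord_left : logCoord a b a = 0 := by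
  simp [logCoord]

theorem logCoord_right (ha : 0 < a) (hab : a < b) : logCoord a b b = 1 :=
  div_self (sub_pos.2 (log_lt_log ha hab)).ne'

theorem logCoord_mem_Icc {x : ℝ} (ha : 0 < a) (hx : x ∈ Icc a b) :
    logCoord a b x ∈ Icc (0 : ℝ) 1 := by
  have hax : log a ≤ log x := log_le_log ha hx.1
  have hxb : log x ≤ log b := log_le_log (ha.trans_le hx.1) hx.2
  exact ⟨div_nonneg (by linarith) (by linarith), div_le_one_of_le₀ (by linarith) (by linarith)⟩

theorem rpow_logCoord_mul_rpow_one_sub {x : ℝ} (ha : 0 < a) (hab : a < b) (hx : 0 < x) :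
    b ^ logCoord a b x * a ^ (1 - logCoord a b x) = x := by
  have hlog : log b - log a ≠ 0 := (sub_pos.2 (log_lt_log ha hab)).ne'
  have hsum : log b * logCoord a b x + log a * (1 - logCoord a b x) = log x := by
    rw [logCoord]
    field_simp
    ring
  rw [rpow_def_of_pos (ha.trans hab), rpow_def_of_pos ha, ← exp_add, hsum, exp_log hx]

theorem hasDerivAt_logCoord {x : ℝ} (hx : x ≠ 0) :
    HasDerivAt (logCoord a b) (x⁻¹ / (log b - log a)) x :=
  ((hasDerivAt_log hx).sub_const _).div_const _

theorem integral_logCoord_div (ha : 0 < a) (hab : a < b) (φ : ℝ → ℝ) :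
    ∫ x in a..b, φ (logCoord a b x) / x = (log b - log a) * ∫ t in 0..1, φ t := by
  have hlog : 0 < log b - log a := sub_pos.2 (log_lt_log ha hab)
  have hpos : ∀ x ∈ uIcc a b, 0 < x := fun x hx ↦ (lt_min ha (ha.trans hab)).trans_le hx.1
  have hderiv : ∀ x ∈ uIcc a b, HasDerivAt (logCoord a b) (x⁻¹ / (log b - log a)) x :=
    fun x hx ↦ hasDerivAt_logCoord (hpos x hx).ne'
  have hsubst := intervalIntegral.integral_comp_mul_deriv_of_deriv_nonneg (g := φ)
    (HasDerivAt.continuousOn hderiv) (fun x hx ↦ hderiv x (Ioo_subset_Icc_self hx))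
    fun x hx ↦ div_nonneg (inv_nonneg.2 (hpos x (Ioo_subset_Icc_self hx)).le) hlog.le
  rw [logCoord_left, logCoord_right ha hab] at hsubst
  rw [← hsubst, ← intervalIntegral.integral_const_mul]
  congr with x
  simp only [Function.comp_apply]
  field_simp

theorem intervalIntegrable_logCoord_div {φ : ℝ → ℝ} (ha : 0 < a) (hab : a < b)
    (hφ : IntervalIntegrable φ volume 0 1) :
    IntervalIntegrable (fun x ↦ φ (logCoord a b x) / x) volume a b := by
  have hlog : 0 < log b - log a := sub_pos.2 (log_lt_log ha hab)
  have hpos : ∀ x ∈ uIcc a b, 0 < x := fun x hx ↦ (lt_min ha (ha.trans hab)).trans_le hx.1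
  have hderiv : ∀ x ∈ uIcc a b, HasDerivAt (logCoord a b) (x⁻¹ / (log b - log a)) x :=
    fun x hx ↦ hasDerivAt_logCoord (hpos x hx).ne'
  rw [← logCoord_left (a := a) (b := b), ← logCoord_right ha hab] at hφ
  have hsubst := (intervalIntegral.integrable_comp_mul_deriv_iff_of_deriv_nonneg
    (HasDerivAt.continuousOn hderiv) (fun x hx ↦ hderiv x (Ioo_subset_Icc_self hx))
    fun x hx ↦ div_nonneg (inv_nonneg.2 (hpos x (Ioo_subset_Icc_self hx)).le) hlog.le).2 hφ
  convert hsubst.mul_const (log b - log a) using 2 with x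
  simp only [Function.comp_apply]
  field_simp

end LogMean

namespace GAConvexOn

variable {a b c m α : ℝ} {h : ℝ → ℝ}

theorem le_logCoord {x : ℝ} (hh : GAConvexOn α m c h) (ha : 0 < a) (hab : a < b) (hm : m ≠ 0)
    (hac : a ^ (1 / m) ≤ c) (hbc : b ≤ c) (hx : x ∈ Icc a b) :
    h x ≤ logCoord a b x ^ α * h b + m * (1 - logCoord a b x ^ α) * h (a ^ (1 / m)) := by
  have hrpow : (a ^ (1 / m)) ^ (m * (1 - logCoord a b x)) = a ^ (1 - logCoord a b x) := by
    rw [← rpow_mul ha.le, ← mul_assoc, one_div_mul_cancel hm, one_mul]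
  have key := hh b ⟨(ha.trans hab).le, hbc⟩ (a ^ (1 / m)) ⟨rpow_nonneg ha.le _, hac⟩ _
    (logCoord_mem_Icc ha hx)
  rwa [hrpow, rpow_logCoord_mul_rpow_one_sub ha hab (ha.trans_le hx.1)] at key

theorem le_add_mul {x : ℝ} (hh : GAConvexOn α m c h) (ha : 0 < a) (hab : a < b) (hα : 0 ≤ α)
    (hm : 0 < m) (hac : a ^ (1 / m) ≤ c) (hbc : b ≤ c) (hx : x ∈ Icc a b) (hb : 0 ≤ h b)
    (ham : 0 ≤ h (a ^ (1 / m))) : h x ≤ h b + m * h (a ^ (1 / m)) := by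
  obtain ⟨ht0, ht1⟩ := logCoord_mem_Icc ha hx
  have hw0 : 0 ≤ logCoord a b x ^ α := rpow_nonneg ht0 α
  have hw1 : logCoord a b x ^ α ≤ 1 := rpow_le_one ht0 ht1 hα
  calc h x ≤ logCoord a b x ^ α * h b + m * (1 - logCoord a b x ^ α) * h (a ^ (1 / m)) :=
        hh.le_logCoord ha hab hm.ne' hac hbc hx
    _ ≤ 1 * h b + m * 1 * h (a ^ (1 / m)) := by gcongr; linarith
    _ = h b + m * h (a ^ (1 / m)) := by ring

/-- A Hermite–Hadamard inequality, obtained by integrating `GAConvexOn.le_logCoord` against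
`dx / x`. -/
theorem integral_div_le (hh : GAConvexOn α m c h) (ha : 0 < a) (hab : a < b) (hα : -1 < α)
    (hm : m ≠ 0) (hac : a ^ (1 / m) ≤ c) (hbc : b ≤ c)
    (hint : IntervalIntegrable (fun x ↦ h x / x) volume a b) :
    ∫ x in a..b, h x / x ≤
      (log b - log a) * ((h b + α * m * h (a ^ (1 / m))) / (α + 1)) := by
  set φ : ℝ → ℝ := fun t ↦ t ^ α * h b + m * (1 - t ^ α) * h (a ^ (1 / m)) with hφ
  have hα1 : α + 1 ≠ 0 := by linarith
  have hpow : IntervalIntegrable (fun t : ℝ ↦ t ^ α) volume 0 1 :=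
    intervalIntegral.intervalIntegrable_rpow' hα
  have hleft : IntervalIntegrable (fun t ↦ t ^ α * h b) volume 0 1 := hpow.mul_const _
  have hright : IntervalIntegrable (fun t ↦ m * (1 - t ^ α) * h (a ^ (1 / m))) volume 0 1 :=
    ((intervalIntegrable_const.sub hpow).const_mul m).mul_const _
  have hpowint : ∫ t in (0 : ℝ)..1, t ^ α = 1 / (α + 1) := by
    rw [integral_rpow (.inl hα), one_rpow, zero_rpow hα1, sub_zero]
  calc ∫ x in a..b, h x / x ≤ ∫ x in a..b, φ (logCoord a b x) / x := by
        refine intervalIntegral.integral_mono_on hab.le hint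
          (intervalIntegrable_logCoord_div ha hab (hleft.add hright)) fun x hx ↦ ?_
        have hx0 : 0 < x := ha.trans_le hx.1
        gcongr
        exact hh.le_logCoord ha hab hm hac hbc hx
    _ = (log b - log a) * ∫ t in 0..1, φ t := integral_logCoord_div ha hab φ
    _ = (log b - log a) * ((h b + α * m * h (a ^ (1 / m))) / (α + 1)) := by
        rw [hφ, intervalIntegral.integral_add hleft hright, intervalIntegral.integral_mul_const,
          intervalIntegral.integral_mul_const, intervalIntegral.integral_const_mul,
          intervalIntegral.integral_sub intervalIntegrable_const hpow, hpowint]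
        simp only [intervalIntegral.integral_const, sub_zero, one_smul]
        field_simp
        ring

variable {E : Type*} [NormedAddCommGroup E] {F : ℝ → E} {p q s : ℝ}

theorem memLp_of_norm_rpow (hF : GAConvexOn α m c fun x ↦ ‖F x‖ ^ q) (ha : 0 < a) (hab : a < b)
    (hα : 0 ≤ α) (hm : 0 < m) (hac : a ^ (1 / m) ≤ c) (hbc : b ≤ c) (hq : 0 < q)
    (hFm : AEStronglyMeasurable F (volume.restrict (Ioc a b))) (r : ENNReal) :
    MemLp F r (volume.restrict (Ioc a b)) := by
  refine .of_bound hFm ((‖F b‖ ^ q + m * ‖F (a ^ (1 / m))‖ ^ q) ^ q⁻¹) ?_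
  refine ae_restrict_of_forall_mem measurableSet_Ioc fun x hx ↦ ?_
  rw [le_rpow_inv_iff_of_pos (norm_nonneg _) (by positivity) hq]
  exact hF.le_add_mul ha hab hα hm hac hbc (Ioc_subset_Icc_self hx) (by positivity) (by positivity)

theorem integral_rpow_mul_norm_le (hF : GAConvexOn α m c fun x ↦ ‖F x‖ ^ q) (ha : 0 < a)
    (hab : a < b) (hα : 0 ≤ α) (hm : 0 < m) (hac : a ^ (1 / m) ≤ c) (hbc : b ≤ c)
    (hpq : p.HolderConjugate q) (hs : s + 1 ≠ 0)
    (hFm : AEStronglyMeasurable F (volume.restrict (Ioc a b))) :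
    ∫ x in a..b, x ^ s * ‖F x‖ ≤
      (log b - log a) * L (a ^ ((s + 1) * p)) (b ^ ((s + 1) * p)) ^ (1 / p) *
        ((‖F b‖ ^ q + α * m * ‖F (a ^ (1 / m))‖ ^ q) / (α + 1)) ^ (1 / q) := by
  have hb : 0 < b := ha.trans hab
  have hq : 0 < q := hpq.symm.pos
  have hlog : 0 < log b - log a := sub_pos.2 (log_lt_log ha hab)
  have hlogpow : (log b - log a) ^ (1 / p) * (log b - log a) ^ (1 / q) = log b - log a := by
    rw [← rpow_add hlog, one_div, one_div, hpq.inv_add_inv_eq_one, rpow_one]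
  have hMem : MemLp F (ENNReal.ofReal q) (volume.restrict (Ioc a b)) :=
    hF.memLp_of_norm_rpow ha hab hα hm hac hbc hq hFm _
  have hHH := hF.integral_div_le ha hab (by linarith) hm.ne' hac hbc
    (intervalIntegrable_norm_rpow_div ha hab.le hq.le hMem)
  set S := (‖F b‖ ^ q + α * m * ‖F (a ^ (1 / m))‖ ^ q) / (α + 1)
  have hS : 0 ≤ S := by positivity
  set Λ := L (a ^ ((s + 1) * p)) (b ^ ((s + 1) * p))
  have hΛ : 0 ≤ Λ := L_nonneg (rpow_pos_of_pos ha _) (rpow_pos_of_pos hb _)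
  have hweight : ∫ x in a..b, x ^ ((s + 1) * p - 1) = (log b - log a) * Λ :=
    integral_rpow_sub_one_eq_mul_L ha hb (mul_ne_zero hs hpq.ne_zero)
  have hnonneg : 0 ≤ ∫ x in a..b, ‖F x‖ ^ q / x :=
    intervalIntegral.integral_nonneg hab.le fun x hx ↦
      div_nonneg (by positivity) (ha.trans_le hx.1).le
  calc ∫ x in a..b, x ^ s * ‖F x‖
      ≤ (∫ x in a..b, x ^ ((s + 1) * p - 1)) ^ (1 / p) *
          (∫ x in a..b, ‖F x‖ ^ q / x) ^ (1 / q) :=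
        integral_rpow_mul_norm_le_holder ha hab.le hpq hMem
    _ ≤ ((log b - log a) * Λ) ^ (1 / p) * ((log b - log a) * S) ^ (1 / q) := by
        rw [hweight]
        gcongr
    _ = ((log b - log a) ^ (1 / p) * (log b - log a) ^ (1 / q)) * Λ ^ (1 / p) * S ^ (1 / q) := by
        rw [mul_rpow hlog.le hΛ, mul_rpow hlog.le hS]
        ring
    _ = (log b - log a) * Λ ^ (1 / p) * S ^ (1 / q) := by rw [hlogpow]

end GAConvexOn

theorem stmt_7_general {E : Type*} [NormedAddCommGroup E] [NormedSpace ℝ E] [CompleteSpace E]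
    (f f' : ℝ → E) (a b m q α : ℝ) (ha : 0 < a) (hab : a < b) (hα : 0 ≤ α) (hm : 0 < m)
    (hq : 1 < q) (hderiv : ∀ x ∈ Icc a b, HasDerivWithinAt f (f' x) (Icc a b) x)
    (hint : IntervalIntegrable f' volume a b)
    (hconv : GAConvexOn α m (max (a ^ (1 / m)) b) (fun x ↦ ‖f' x‖ ^ q)) :
    ‖(2⁻¹ : ℝ) • (b ^ 2 • f b - a ^ 2 • f a) - ∫ x in a..b, x • f x‖ ≤
      (log b - log a) / (2 * (α + 1) ^ (1 / q)) *
        L (a ^ (3 * q / (q - 1))) (b ^ (3 * q / (q - 1))) ^ (1 - 1 / q) *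
        (‖f' b‖ ^ q + α * m * ‖f' (a ^ (1 / m))‖ ^ q) ^ (1 / q) := by
  have hpq : (q / (q - 1)).HolderConjugate q := (HolderConjugate.conjExponent hq).symm
  have hinv : 1 / (q / (q - 1)) = 1 - 1 / q := by
    rw [one_div, one_div, hpq.symm.one_sub_inv]
  have hparts : ∫ x in a..b, x ^ 2 • f' x =
      b ^ 2 • f b - a ^ 2 • f a - (2 : ℝ) • ∫ x in a..b, x • f x := by
    simpa [one_add_one_eq_two] using
      integral_pow_succ_smul_deriv 1 (by rwa [uIcc_of_le hab.le]) hint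
  have hnorm (x : ℝ) : ‖x ^ 2 • f' x‖ = x ^ (2 : ℝ) * ‖f' x‖ := by
    rw [norm_smul_of_nonneg (sq_nonneg x), rpow_two]
  have hbound := hconv.integral_rpow_mul_norm_le (s := 2) ha hab hα hm (le_max_left _ _)
    (le_max_right _ _) hpq (by norm_num) hint.1.aestronglyMeasurable
  rw [hinv, ← mul_div_assoc, two_add_one_eq_three, div_rpow (by positivity) (by positivity)]
    at hbound
  calc ‖(2⁻¹ : ℝ) • (b ^ 2 • f b - a ^ 2 • f a) - ∫ x in a..b, x • f x‖
      = 2⁻¹ * ‖∫ x in a..b, x ^ 2 • f' x‖ := by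
        rw [← norm_smul_of_nonneg (by norm_num), hparts, smul_sub _ _ ((2 : ℝ) • _),
          inv_smul_smul₀ two_ne_zero]
    _ ≤ 2⁻¹ * ∫ x in a..b, x ^ (2 : ℝ) * ‖f' x‖ := by
        gcongr
        simpa only [← hnorm] using intervalIntegral.norm_integral_le_integral_norm hab.le
    _ ≤ 2⁻¹ * _ := mul_le_mul_of_nonneg_left hbound (by norm_num)
    _ = _ := by ring

theorem stmt_7 (f f' : ℝ → ℝ) (a b m q : ℝ) (ha : 0 < a) (hab : a < b)
    (hm : m ∈ Ioc (0:ℝ) 1) (hq : 1 < q)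
    (hderiv : ∀ x ∈ Ici (0:ℝ), HasDerivAt f (f' x) x)
    (hint : IntervalIntegrable f' volume a b)
    (hconv : GAConvexOn 1 m (max (a ^ (1/m)) b) (fun x => |f' x| ^ q)) :
    |(b ^ 2 * f b - a ^ 2 * f a) / 2 - ∫ x in a..b, x * f x| ≤
      ((Real.log b - Real.log a) / 2 ^ (1 + 1/q)) *
        L (a ^ (3 * q / (q - 1))) (b ^ (3 * q / (q - 1))) ^ (1 - 1/q) *
        (|f' b| ^ q + m * |f' (a ^ (1/m))| ^ q) ^ (1/q) := by
  have hgen := stmt_7_general f f' a b m q 1 ha hab zero_le_one hm.1 hq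
    (fun x hx ↦ (hderiv x (ha.le.trans hx.1)).hasDerivWithinAt) hint hconv
  simpa [rpow_add, one_add_one_eq_two, inv_mul_eq_div] using hgen
end

section
/- Let f : [0,∞) → ℝ be differentiable with f' Lebesgue integrable on [a,b], where 0 < a < b < ∞. Let (α,m) ∈ (0,1]² and q > 1. If |f'|^q is (α,m)-GA-convex on [0, max{a^{1/m}, b}], then |(b²·f(b) − a²·f(a))/2 − ∫_a^b x·f(x) dx| ≤ ((ln b − ln a)/2) · { m·[L(a^{3q}, b^{3q}) − G(α,3q)]·|f'(a^{1/m})|^q + G(α,3q)·|f'(b)|^q }^{1/q}. -/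
open Real MeasureTheory Set

/-!
Along the geometric segment `g t = a ^ (1 - t) * b ^ t` one has `g' = (log b - log a) g`, so
integration by parts followed by the substitution `x = g t` turns the left-hand side into
`(log b - log a) / 2 * ∫₀¹ g ^ 3 * f' ∘ g`. By Jensen's inequality the `q`-th power of this integral
is at most `∫₀¹ g ^ (3 * q) * |f' ∘ g| ^ q`. Since `g t = b ^ t * (a ^ (1 / m)) ^ (m * (1 - t))`,
GA-convexity bounds `|f' (g t)| ^ q` by an affine function of `t ^ α`; the integral of
`g ^ (3 * q)` is a logarithmic mean and that of `t ^ α * g ^ (3 * q)` is a value of `G`.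
-/

theorem norm_integral_le_rpow_integral_of_norm_rpow_le {Ω E : Type*} [MeasurableSpace Ω]
    [NormedAddCommGroup E] [NormedSpace ℝ E] {μ : Measure Ω} [IsProbabilityMeasure μ]
    {F : Ω → E} {H : Ω → ℝ} {q : ℝ} (hq : 1 ≤ q) (hH : Integrable H μ)
    (hFH : ∀ᵐ x ∂μ, ‖F x‖ ^ q ≤ H x) :
    ‖∫ x, F x ∂μ‖ ≤ (∫ x, H x ∂μ) ^ (1 / q) := by
  have hq0 : 0 < q := zero_lt_one.trans_le hq
  have hH0 : 0 ≤ ∫ x, H x ∂μ :=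
    integral_nonneg_of_ae (hFH.mono fun x hx => (rpow_nonneg (norm_nonneg _) q).trans hx)
  by_cases hF : Integrable F μ
  · have hFq : Integrable (fun x => ‖F x‖ ^ q) μ :=
      hH.mono' (hF.norm.aemeasurable.pow_const q).aestronglyMeasurable <|
        hFH.mono fun x hx => by rwa [norm_of_nonneg (rpow_nonneg (norm_nonneg _) q)]
    rw [one_div, le_rpow_inv_iff_of_pos (norm_nonneg _) hH0 hq0]
    calc ‖∫ x, F x ∂μ‖ ^ q
        ≤ (∫ x, ‖F x‖ ∂μ) ^ q :=
          rpow_le_rpow (norm_nonneg _) (norm_integral_le_integral_norm F) hq0.le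
      _ ≤ ∫ x, ‖F x‖ ^ q ∂μ :=
          (convexOn_rpow hq).map_integral_le (continuous_rpow_const hq0.le).continuousOn
            isClosed_Ici (ae_of_all _ fun x => norm_nonneg (F x)) hF.norm hFq
      _ ≤ ∫ x, H x ∂μ := integral_mono_ae hFq hH hFH
  · rw [integral_undef hF, norm_zero]
    exact rpow_nonneg hH0 _

theorem norm_intervalIntegral_le_rpow_integral_of_norm_rpow_le {E : Type*}
    [NormedAddCommGroup E] [NormedSpace ℝ E] {F : ℝ → E} {H : ℝ → ℝ} {q : ℝ} (hq : 1 ≤ q)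
    (hH : IntervalIntegrable H volume 0 1) (hFH : ∀ t ∈ Icc (0 : ℝ) 1, ‖F t‖ ^ q ≤ H t) :
    ‖∫ t in (0 : ℝ)..1, F t‖ ≤ (∫ t in (0 : ℝ)..1, H t) ^ (1 / q) := by
  have : IsProbabilityMeasure (volume.restrict (Ioc (0 : ℝ) 1)) := ⟨by simp⟩
  simp only [intervalIntegral.integral_of_le zero_le_one]
  refine norm_integral_le_rpow_integral_of_norm_rpow_le hq hH.1 ?_
  filter_upwards [ae_restrict_mem measurableSet_Ioc] with t ht
  exact hFH t (Ioc_subset_Icc_self ht)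

/-- The geometric segment from `a` to `b`: the weighted geometric mean of `a` and `b` with weights
`1 - t` and `t`, as a function of `t`. For positive `a`, `b` it is the image under `exp` of the
affine segment from `log a` to `log b`, and it serves as the substitution on `[0, 1]`. -/
noncomputable def geomSegment (a b t : ℝ) : ℝ := a ^ (1 - t) * b ^ t

namespace geomSegment

variable {a b : ℝ}

theorem pos (ha : 0 < a) (hb : 0 < b) (t : ℝ) : 0 < geomSegment a b t :=
  mul_pos (rpow_pos_of_pos ha _) (rpow_pos_of_pos hb _)

theorem apply_zero (a b : ℝ) : geomSegment a b 0 = a := by simp [geomSegment]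

theorem apply_one (a b : ℝ) : geomSegment a b 1 = b := by simp [geomSegment]

theorem rpow_eq_mul (ha : 0 ≤ a) (hb : 0 ≤ b) (t r : ℝ) :
    geomSegment a b t ^ r = a ^ (r * (1 - t)) * b ^ (r * t) := by
  rw [geomSegment, mul_rpow (rpow_nonneg ha _) (rpow_nonneg hb _), ← rpow_mul ha, ← rpow_mul hb,
    mul_comm r, mul_comm r]

theorem rpow_eq_geomSegment_rpow (ha : 0 ≤ a) (hb : 0 ≤ b) (t r : ℝ) :
    geomSegment a b t ^ r = geomSegment (a ^ r) (b ^ r) t := by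
  rw [rpow_eq_mul ha hb, geomSegment, rpow_mul ha, rpow_mul hb]

theorem hasDerivAt (ha : 0 < a) (hb : 0 < b) (t : ℝ) :
    HasDerivAt (geomSegment a b) (geomSegment a b t * (log b - log a)) t := by
  have h := (((hasDerivAt_id t).const_sub 1).const_rpow ha).mul ((hasDerivAt_id t).const_rpow hb)
  refine h.congr_deriv ?_
  simp only [geomSegment, id_eq]
  ring

theorem continuous (ha : 0 < a) (hb : 0 < b) : Continuous (geomSegment a b) :=
  continuous_iff_continuousAt.2 fun t => (hasDerivAt ha hb t).continuousAt

theorem continuous_rpow (ha : 0 < a) (hb : 0 < b) (r : ℝ) :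
    Continuous fun t => geomSegment a b t ^ r :=
  (continuous ha hb).rpow_const fun t => Or.inl (pos ha hb t).ne'

theorem integral_mul_comp (ha : 0 < a) (hb : 0 < b) (φ : ℝ → ℝ) :
    (log b - log a) * ∫ t in (0 : ℝ)..1, geomSegment a b t * φ (geomSegment a b t) =
      ∫ x in a..b, φ x := by
  have hsubst : ∫ t in (0 : ℝ)..1, (φ ∘ geomSegment a b) t *
      (geomSegment a b t * (log b - log a)) = ∫ x in a..b, φ x := by
    have hcont : ContinuousOn (geomSegment a b) (uIcc 0 1) := (continuous ha hb).continuousOn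
    rcases le_total a b with hab | hba
    · simpa only [apply_zero, apply_one] using
        intervalIntegral.integral_comp_mul_deriv_of_deriv_nonneg (g := φ) hcont
          (fun t _ => hasDerivAt ha hb t) fun t _ =>
            mul_nonneg (pos ha hb t).le (sub_nonneg.2 (log_le_log ha hab))
    · simpa only [apply_zero, apply_one] using
        intervalIntegral.integral_comp_mul_deriv_of_deriv_nonpos (g := φ) hcont
          (fun t _ => hasDerivAt ha hb t) fun t _ =>
            mul_nonpos_of_nonneg_of_nonpos (pos ha hb t).le (sub_nonpos.2 (log_le_log hb hba))
  rw [← hsubst, ← intervalIntegral.integral_const_mul]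
  congr 1 with t
  simp only [Function.comp_apply]
  ring

theorem integral_eq_L (ha : 0 < a) (hb : 0 < b) (hab : a ≠ b) :
    ∫ t in (0 : ℝ)..1, geomSegment a b t = L a b := by
  have hlog : log b - log a ≠ 0 := sub_ne_zero.2 fun h => hab (log_injOn_pos ha hb h.symm)
  rw [L, eq_div_iff hlog, mul_comm]
  simpa using integral_mul_comp ha hb fun _ => 1

theorem integral_rpow_eq_L (ha : 0 < a) (hb : 0 < b) (hab : a ≠ b) {r : ℝ} (hr : r ≠ 0) :
    ∫ t in (0 : ℝ)..1, geomSegment a b t ^ r = L (a ^ r) (b ^ r) := by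
  have hne : a ^ r ≠ b ^ r := fun h => hab ((rpow_left_inj ha.le hb.le hr).1 h)
  simp only [rpow_eq_geomSegment_rpow ha.le hb.le,
    integral_eq_L (rpow_pos_of_pos ha r) (rpow_pos_of_pos hb r) hne]

theorem integral_rpow_mul_rpow_eq_G (ha : 0 ≤ a) (hb : 0 ≤ b) (α r : ℝ) :
    ∫ t in (0 : ℝ)..1, t ^ α * geomSegment a b t ^ r = G a b α r := by
  simp only [G, rpow_eq_mul ha hb, mul_assoc]

theorem integral_rpow_mul_affine (ha : 0 < a) (hb : 0 < b) (hab : a ≠ b) {α r : ℝ}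
    (hα : 0 ≤ α) (hr : r ≠ 0) (m A B : ℝ) :
    ∫ t in (0 : ℝ)..1, geomSegment a b t ^ r * (t ^ α * B + m * (1 - t ^ α) * A) =
      m * (L (a ^ r) (b ^ r) - G a b α r) * A + G a b α r * B := by
  have hg : Continuous fun t => geomSegment a b t ^ r := continuous_rpow ha hb r
  have htg : Continuous fun t => t ^ α * geomSegment a b t ^ r := (continuous_rpow_const hα).mul hg
  calc ∫ t in (0 : ℝ)..1, geomSegment a b t ^ r * (t ^ α * B + m * (1 - t ^ α) * A)
      = ∫ t in (0 : ℝ)..1, (m * A * geomSegment a b t ^ r +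
          (B - m * A) * (t ^ α * geomSegment a b t ^ r)) := by
        congr 1 with t
        ring
    _ = m * A * L (a ^ r) (b ^ r) + (B - m * A) * G a b α r := by
        rw [intervalIntegral.integral_add ((hg.intervalIntegrable _ _).const_mul _)
            ((htg.intervalIntegrable _ _).const_mul _),
          intervalIntegral.integral_const_mul, intervalIntegral.integral_const_mul,
          integral_rpow_eq_L ha hb hab hr, integral_rpow_mul_rpow_eq_G ha.le hb.le]
    _ = m * (L (a ^ r) (b ^ r) - G a b α r) * A + G a b α r * B := by ring

end geomSegment

theorem GAConvexOn.geomSegment_le {α m c : ℝ} {h : ℝ → ℝ} (hh : GAConvexOn α m c h) (hm : m ≠ 0)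
    {a b t : ℝ} (ha : 0 ≤ a) (hac : a ^ (1 / m) ≤ c) (hb : b ∈ Icc 0 c) (ht : t ∈ Icc (0 : ℝ) 1) :
    h (geomSegment a b t) ≤ t ^ α * h b + m * (1 - t ^ α) * h (a ^ (1 / m)) := by
  have hpow : (a ^ (1 / m)) ^ (m * (1 - t)) = a ^ (1 - t) := by
    rw [← rpow_mul ha, ← mul_assoc, one_div_mul_cancel hm, one_mul]
  simpa only [hpow, geomSegment, mul_comm (b ^ t)] using
    hh b hb (a ^ (1 / m)) ⟨rpow_nonneg ha _, hac⟩ t ht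

theorem rpow_mul_sub_integral_eq_integral_geomSegment {f f' : ℝ → ℝ} {a b : ℝ} (ha : 0 < a)
    (hb : 0 < b) (hf : ∀ x ∈ uIcc a b, HasDerivWithinAt f (f' x) (uIcc a b) x)
    (hf' : IntervalIntegrable f' volume a b) (p : ℝ) :
    b ^ p * f b - a ^ p * f a - p * ∫ x in a..b, x ^ (p - 1) * f x =
      (log b - log a) *
        ∫ t in (0 : ℝ)..1, geomSegment a b t ^ (p + 1) * f' (geomSegment a b t) := by
  have hpos : ∀ x ∈ uIcc a b, 0 < x := fun x hx => (lt_min ha hb).trans_le hx.1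
  have hderiv : ∀ x ∈ uIcc a b,
      HasDerivWithinAt (fun x => x ^ p) (p * x ^ (p - 1)) (uIcc a b) x := fun x hx =>
    (hasDerivAt_rpow_const (Or.inl (hpos x hx).ne')).hasDerivWithinAt
  have hint : IntervalIntegrable (fun x => p * x ^ (p - 1)) volume a b :=
    (intervalIntegral.intervalIntegrable_rpow
      (Or.inr fun h0 => (hpos 0 h0).false)).const_mul p
  calc b ^ p * f b - a ^ p * f a - p * ∫ x in a..b, x ^ (p - 1) * f x
      = ∫ x in a..b, x ^ p * f' x := by
        rw [intervalIntegral.integral_mul_deriv_eq_deriv_mul_of_hasDerivWithinAt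
          hderiv hf hint hf']
        simp only [mul_assoc, intervalIntegral.integral_const_mul]
    _ = (log b - log a) * ∫ t in (0 : ℝ)..1,
          geomSegment a b t * (geomSegment a b t ^ p * f' (geomSegment a b t)) :=
        (geomSegment.integral_mul_comp ha hb fun x => x ^ p * f' x).symm
    _ = (log b - log a) *
          ∫ t in (0 : ℝ)..1, geomSegment a b t ^ (p + 1) * f' (geomSegment a b t) := by
        congr 2 with t
        rw [rpow_add_one (geomSegment.pos ha hb t).ne']
        ring

theorem abs_integral_geomSegment_rpow_mul_le {φ : ℝ → ℝ} {a b α m q r : ℝ} (ha : 0 < a)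
    (hb : 0 < b) (hab : a ≠ b) (hα : 0 ≤ α) (hm : m ≠ 0) (hq : 1 ≤ q) (hr : r ≠ 0)
    (hconv : GAConvexOn α m (max (a ^ (1 / m)) b) fun x => |φ x| ^ q) :
    |∫ t in (0 : ℝ)..1, geomSegment a b t ^ r * φ (geomSegment a b t)| ≤
      (m * (L (a ^ (r * q)) (b ^ (r * q)) - G a b α (r * q)) * |φ (a ^ (1 / m))| ^ q +
        G a b α (r * q) * |φ b| ^ q) ^ (1 / q) := by
  have hrq : r * q ≠ 0 := mul_ne_zero hr (zero_lt_one.trans_le hq).ne'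
  have hbound : Continuous fun t => geomSegment a b t ^ (r * q) *
      (t ^ α * |φ b| ^ q + m * (1 - t ^ α) * |φ (a ^ (1 / m))| ^ q) :=
    (geomSegment.continuous_rpow ha hb (r * q)).mul (by fun_prop (disch := exact hα))
  rw [← geomSegment.integral_rpow_mul_affine ha hb hab hα hrq, ← norm_eq_abs]
  refine norm_intervalIntegral_le_rpow_integral_of_norm_rpow_le hq
    (hbound.intervalIntegrable _ _) fun t ht => ?_
  have hg : 0 < geomSegment a b t := geomSegment.pos ha hb t
  calc ‖geomSegment a b t ^ r * φ (geomSegment a b t)‖ ^ q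
      = geomSegment a b t ^ (r * q) * |φ (geomSegment a b t)| ^ q := by
        rw [norm_mul, norm_eq_abs, norm_eq_abs, abs_of_pos (rpow_pos_of_pos hg r),
          mul_rpow (rpow_nonneg hg.le r) (abs_nonneg _), ← rpow_mul hg.le]
    _ ≤ geomSegment a b t ^ (r * q) *
          (t ^ α * |φ b| ^ q + m * (1 - t ^ α) * |φ (a ^ (1 / m))| ^ q) := by
        gcongr
        exact hconv.geomSegment_le hm ha.le (le_max_left _ _) ⟨hb.le, le_max_right _ _⟩ ht

theorem stmt_8_general {f f' : ℝ → ℝ} {a b α m p q : ℝ} (ha : 0 < a) (hab : a < b) (hα : 0 ≤ α)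
    (hm : 0 < m) (hq : 1 ≤ q) (hp : p ≠ 0) (hp1 : p + 1 ≠ 0)
    (hderiv : ∀ x ∈ Icc a b, HasDerivWithinAt f (f' x) (Icc a b) x)
    (hint : IntervalIntegrable f' volume a b)
    (hconv : GAConvexOn α m (max (a ^ (1 / m)) b) fun x => |f' x| ^ q) :
    |(b ^ p * f b - a ^ p * f a) / p - ∫ x in a..b, x ^ (p - 1) * f x| ≤
      (log b - log a) / |p| *
        (m * (L (a ^ ((p + 1) * q)) (b ^ ((p + 1) * q)) - G a b α ((p + 1) * q)) *
            |f' (a ^ (1 / m))| ^ q +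
          G a b α ((p + 1) * q) * |f' b| ^ q) ^ (1 / q) := by
  have hb : 0 < b := ha.trans hab
  have hlog : 0 ≤ log b - log a := sub_nonneg.2 (log_le_log ha hab.le)
  rw [← uIcc_of_le hab.le] at hderiv
  have hidentity : (b ^ p * f b - a ^ p * f a) / p - ∫ x in a..b, x ^ (p - 1) * f x =
      (log b - log a) / p *
        ∫ t in (0 : ℝ)..1, geomSegment a b t ^ (p + 1) * f' (geomSegment a b t) := by
    rw [div_mul_eq_mul_div, ← rpow_mul_sub_integral_eq_integral_geomSegment ha hb hderiv hint,
      sub_div _ (p * _), mul_div_cancel_left₀ _ hp]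
  rw [hidentity, abs_mul, abs_div, abs_of_nonneg hlog]
  gcongr
  exact abs_integral_geomSegment_rpow_mul_le ha hb hab.ne hα hm.ne' hq hp1 hconv

theorem stmt_8 (f f' : ℝ → ℝ) (a b α m q : ℝ) (ha : 0 < a) (hab : a < b)
    (hα : α ∈ Ioc (0:ℝ) 1) (hm : m ∈ Ioc (0:ℝ) 1) (hq : 1 < q)
    (hderiv : ∀ x ∈ Ici (0:ℝ), HasDerivAt f (f' x) x)
    (hint : IntervalIntegrable f' volume a b)
    (hconv : GAConvexOn α m (max (a ^ (1/m)) b) (fun x => |f' x| ^ q)) :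
    |(b ^ 2 * f b - a ^ 2 * f a) / 2 - ∫ x in a..b, x * f x| ≤
      ((Real.log b - Real.log a) / 2) *
        (m * (L (a ^ (3 * q)) (b ^ (3 * q)) - G a b α (3 * q)) * |f' (a ^ (1/m))| ^ q +
          G a b α (3 * q) * |f' b| ^ q) ^ (1/q) := by
  simpa [show (2 : ℝ) - 1 = 1 by norm_num, two_add_one_eq_three] using
    stmt_8_general (p := 2) ha hab hα.1.le hm.1 hq.le two_ne_zero (by norm_num)
      (fun x hx => (hderiv x (ha.le.trans hx.1)).hasDerivWithinAt) hint hconv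
end
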